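/- In moment persuasion, if v : X → ℝ is Lipschitz continuous on X, then the persuasion problem with objective V(μ) = v(∫_Ω m dμ) is regular: the concave closure V̂ is superdifferentiable at μ₀, i.e. there exists an affine continuous V̄ : Δ(Ω) → ℝ with V̄(μ₀) = V̂(μ₀) and V̄(μ) ≥ V̂(μ) for all μ ∈ Δ(Ω). -/

import Mathlib

open MeasureTheory

/-- Convex combination `t μ + (1 - t) η` of two probability measures. -/
noncomputable def mix {Ω : Type*} [MeasurableSpace Ω] (t : NNReal) (ht : t ≤ 1)
    (μ η : ProbabilityMeasure Ω) : ProbabilityMeasure Ω :=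
  ⟨t • (μ : Measure Ω) + (1 - t) • (η : Measure Ω), by
    constructor
    simp only [Measure.coe_add, Pi.add_apply, Measure.smul_apply, smul_eq_mul,
      measure_univ, mul_one, ENNReal.smul_def]
    rw [← ENNReal.coe_add, add_tsub_cancel_of_le ht, ENNReal.coe_one]⟩

/-- A function `H : Δ(Ω) → ℝ` is affine if it respects convex combinations. -/
def IsAffine {Ω : Type*} [MeasurableSpace Ω] (H : ProbabilityMeasure Ω → ℝ) : Prop :=
  ∀ (μ η : ProbabilityMeasure Ω) (t : NNReal) (ht : t ≤ 1),
    H (mix t ht μ η) = (t : ℝ) * H μ + (1 - (t : ℝ)) * H η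

/-- The concave closure `V̂(μ) = inf {H(μ) : H affine continuous, H ≥ V}`. -/
noncomputable def concaveClosure {Ω : Type*} [MeasurableSpace Ω] [TopologicalSpace Ω]
    [OpensMeasurableSpace Ω] (V : ProbabilityMeasure Ω → ℝ) (μ : ProbabilityMeasure Ω) : ℝ :=
  sInf {r : ℝ | ∃ H : ProbabilityMeasure Ω → ℝ,
    Continuous H ∧ IsAffine H ∧ (∀ μ', V μ' ≤ H μ') ∧ r = H μ}

/-- The persuasion problem is regular if the concave closure `V̂` is superdifferentiable at
`μ₀`. -/
def RegularPersuasion {Ω : Type*} [MeasurableSpace Ω] [TopologicalSpace Ω]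
    [OpensMeasurableSpace Ω] (V : ProbabilityMeasure Ω → ℝ) (μ₀ : ProbabilityMeasure Ω) : Prop :=
  ∃ Vbar : ProbabilityMeasure Ω → ℝ, Continuous Vbar ∧ IsAffine Vbar ∧
    Vbar μ₀ = concaveClosure V μ₀ ∧ ∀ μ, concaveClosure V μ ≤ Vbar μ

/-!
Continuous affine functions on `Δ(Ω)` are the integrals `μ ↦ ∫ p dμ` of continuous price functions
`p`, since finitely supported measures are dense. Extend `v` to a `K`-Lipschitz function on the
whole space. Given an affine continuous majorant `H` of `V`, the infimal convolution
`P x = inf_μ (H μ + K ‖x - ∫ m dμ‖)` is convex and `K`-Lipschitz, lies above `v`, and satisfies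
`P (m ω) ≤ H δ_ω`. By Jensen's inequality the price function `P ∘ m` still majorizes `V`, and it is
no more expensive than `H` at the prior. Hence `V̂(μ₀)` may be computed with price functions of
modulus `K ‖m x - m y‖` only, whose sublevel sets are compact by Arzelà–Ascoli, so the infimum is
attained; a minimizer is the required superdifferential.
-/

open Set Filter Topology
open scoped NNReal

section Mixtures

variable {Ω : Type*} [MeasurableSpace Ω] {E : Type*} [NormedAddCommGroup E] [NormedSpace ℝ E]

lemma coe_mix (t : ℝ≥0) (ht : t ≤ 1) (μ η : ProbabilityMeasure Ω) :
    (mix t ht μ η : Measure Ω) = t • (μ : Measure Ω) + (1 - t) • (η : Measure Ω) :=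
  rfl

lemma integral_mix {f : Ω → E} {μ η : ProbabilityMeasure Ω} (hμ : Integrable f μ)
    (hη : Integrable f η) (t : ℝ≥0) (ht : t ≤ 1) :
    ∫ ω, f ω ∂(mix t ht μ η : Measure Ω) =
      (t : ℝ) • ∫ ω, f ω ∂(μ : Measure Ω) + (1 - (t : ℝ)) • ∫ ω, f ω ∂(η : Measure Ω) := by
  rw [coe_mix, integral_add_measure (hμ.smul_measure_nnreal) (hη.smul_measure_nnreal),
    integral_smul_nnreal_measure, integral_smul_nnreal_measure, NNReal.smul_def, NNReal.smul_def,
    NNReal.coe_sub ht, NNReal.coe_one]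

lemma convex_range_of_map_mix {F : ProbabilityMeasure Ω → E}
    (hF : ∀ μ η t ht, F (mix t ht μ η) = (t : ℝ) • F μ + (1 - (t : ℝ)) • F η) :
    Convex ℝ (range F) := by
  rintro _ ⟨μ, rfl⟩ _ ⟨η, rfl⟩ a c ha hc hac
  obtain rfl : c = 1 - a := by linarith
  exact ⟨mix ⟨a, ha⟩ (show a ≤ 1 from sub_nonneg.1 hc) μ η, hF μ η ⟨a, ha⟩ _⟩

lemma isBounded_range_integral {f : Ω → E} (hf : Bornology.IsBounded (range f)) :
    Bornology.IsBounded (range fun μ : ProbabilityMeasure Ω => ∫ ω, f ω ∂(μ : Measure Ω)) := by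
  obtain ⟨C, hC⟩ := hf.exists_norm_le
  refine isBounded_iff_forall_norm_le.2 ⟨C, forall_mem_range.2 fun μ => ?_⟩
  simpa using norm_integral_le_of_norm_le_const (μ := (μ : Measure Ω))
    (Eventually.of_forall fun ω => hC (f ω) (mem_range_self ω))

lemma integral_diracProba [MeasurableSingletonClass Ω] [CompleteSpace E] (f : Ω → E) (a : Ω) :
    ∫ ω, f ω ∂(diracProba a : Measure Ω) = f a :=
  integral_dirac f a

lemma eq_diracProba_of_compl_singleton [MeasurableSingletonClass Ω] {μ : ProbabilityMeasure Ω}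
    {a : Ω} (h : (μ : Measure Ω) {a}ᶜ = 0) : μ = diracProba a := by
  have hmass : (μ : Measure Ω) {a} = 1 := (prob_compl_eq_zero_iff (measurableSet_singleton a)).1 h
  apply Subtype.ext
  calc (μ : Measure Ω) = (μ : Measure Ω).restrict {a} :=
        (Measure.restrict_eq_self_of_ae_mem h).symm
    _ = Measure.dirac a := by rw [Measure.restrict_singleton, hmass, one_smul]

lemma exists_eq_mix_diracProba_cond [MeasurableSingletonClass Ω] {μ : ProbabilityMeasure Ω} {a : Ω}
    (h : (μ : Measure Ω) {a}ᶜ ≠ 0) :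
    ∃ η : ProbabilityMeasure Ω, (η : Measure Ω) = ProbabilityTheory.cond (μ : Measure Ω) {a}ᶜ ∧
      μ = mix (μ {a}) (μ.apply_le_one {a}) (diracProba a) η := by
  have ha : MeasurableSet ({a} : Set Ω) := measurableSet_singleton a
  have hmass : ((1 - μ {a} : ℝ≥0) : ENNReal) = (μ : Measure Ω) {a}ᶜ := by
    simp [prob_compl_eq_one_sub ha]
  have hdirac : μ {a} • Measure.dirac a = (μ : Measure Ω).restrict {a} := by
    simp [Measure.restrict_singleton, ENNReal.smul_def]
  have hcond : (1 - μ {a}) • ProbabilityTheory.cond (μ : Measure Ω) {a}ᶜ =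
      (μ : Measure Ω).restrict {a}ᶜ := by
    rw [ENNReal.smul_def, hmass, ProbabilityTheory.cond, smul_smul,
      ENNReal.mul_inv_cancel h (measure_ne_top _ _), one_smul]
  refine ⟨⟨_, ProbabilityTheory.cond_isProbabilityMeasure h⟩, rfl, Subtype.ext ?_⟩
  calc (μ : Measure Ω) = (μ : Measure Ω).restrict {a} + (μ : Measure Ω).restrict {a}ᶜ :=
        (Measure.restrict_add_restrict_compl ha).symm
    _ = _ := by rw [← hdirac, ← hcond]; rfl

lemma mem_of_mix_mem_of_finset_support [MeasurableSingletonClass Ω]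
    {S : Set (ProbabilityMeasure Ω)} (hdirac : ∀ a, diracProba a ∈ S)
    (hmix : ∀ μ ∈ S, ∀ η ∈ S, ∀ t ht, mix t ht μ η ∈ S) (s : Finset Ω)
    {μ : ProbabilityMeasure Ω} (hμ : (μ : Measure Ω) (s : Set Ω)ᶜ = 0) : μ ∈ S := by
  classical
  induction s using Finset.induction_on generalizing μ with
  | empty => simp at hμ
  | insert a s _ ih =>
    by_cases ha : (μ : Measure Ω) {a}ᶜ = 0
    · exact eq_diracProba_of_compl_singleton ha ▸ hdirac a
    · obtain ⟨η, hη, hμη⟩ := exists_eq_mix_diracProba_cond ha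
      have hηs : (η : Measure Ω) (s : Set Ω)ᶜ = 0 := by
        rw [hη, ProbabilityTheory.cond_apply (measurableSet_singleton a).compl, ← compl_union,
          singleton_union, ← Finset.coe_insert, hμ, mul_zero]
      rw [hμη]
      exact hmix _ (hdirac a) _ (ih hηs) _ _

end Mixtures

lemma exists_tendsto_finset_support {Ω : Type*} [EMetricSpace Ω]
    [TopologicalSpace.SeparableSpace Ω] [MeasurableSpace Ω] [OpensMeasurableSpace Ω]
    (μ : ProbabilityMeasure Ω) :
    ∃ ν : ℕ → ProbabilityMeasure Ω, Tendsto ν atTop (𝓝 μ) ∧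
      ∀ n, ∃ s : Finset Ω, (ν n : Measure Ω) (s : Set Ω)ᶜ = 0 := by
  obtain ⟨x₀⟩ : Nonempty Ω := nonempty_of_isProbabilityMeasure (μ : Measure Ω)
  let f : ℕ → SimpleFunc Ω Ω := SimpleFunc.approxOn id measurable_id univ x₀ (mem_univ x₀)
  have hf (ω : Ω) : Tendsto (fun n => f n ω) atTop (𝓝 ω) :=
    SimpleFunc.tendsto_approxOn measurable_id (mem_univ x₀) (by simp)
  have hlim := (tendstoInDistribution_of_ae_tendsto (fun n => (f n).measurable.aemeasurable)
    aemeasurable_id (Eventually.of_forall hf : ∀ᵐ ω ∂(μ : Measure Ω), _)).tendsto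
  refine ⟨fun n => μ.map (f n).measurable.aemeasurable, ?_, fun n => ⟨(f n).range, ?_⟩⟩
  · have hid : μ.map aemeasurable_id = μ := Subtype.ext Measure.map_id
    exact hlim.trans_eq (congrArg 𝓝 hid)
  · have hrange : f n ⁻¹' ((f n).range : Set Ω)ᶜ = ∅ := by
      rw [SimpleFunc.coe_range, preimage_compl, preimage_range, compl_univ]
    rw [ProbabilityMeasure.toMeasure_map,
      Measure.map_apply (f n).measurable (Finset.measurableSet _).compl, hrange, measure_empty]

theorem mem_of_isClosed_of_mix_mem {Ω : Type*} [EMetricSpace Ω]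
    [TopologicalSpace.SeparableSpace Ω] [MeasurableSpace Ω] [OpensMeasurableSpace Ω]
    {S : Set (ProbabilityMeasure Ω)} (hS : IsClosed S)
    (hdirac : ∀ a, diracProba a ∈ S) (hmix : ∀ μ ∈ S, ∀ η ∈ S, ∀ t ht, mix t ht μ η ∈ S)
    (μ : ProbabilityMeasure Ω) : μ ∈ S := by
  obtain ⟨ν, hνμ, hν⟩ := exists_tendsto_finset_support μ
  refine hS.mem_of_tendsto hνμ (Eventually.of_forall fun n => ?_)
  obtain ⟨s, hs⟩ := hν n
  exact mem_of_mix_mem_of_finset_support hdirac hmix s hs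

lemma integrable_of_continuous {X E : Type*} [TopologicalSpace X] [CompactSpace X]
    [MeasurableSpace X] [OpensMeasurableSpace X] [NormedAddCommGroup E] {f : X → E}
    (hf : Continuous f) (μ : Measure X) [IsFiniteMeasure μ] : Integrable f μ :=
  hf.integrable_of_hasCompactSupport (HasCompactSupport.of_compactSpace f)

section CompactSpace

variable {Ω : Type*} [TopologicalSpace Ω] [CompactSpace Ω] [MeasurableSpace Ω]

lemma isAffine_integral [OpensMeasurableSpace Ω] {f : Ω → ℝ} (hf : Continuous f) :
    IsAffine fun μ : ProbabilityMeasure Ω => ∫ ω, f ω ∂(μ : Measure Ω) := fun _ _ _ _ =>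
  integral_mix (integrable_of_continuous hf _) (integrable_of_continuous hf _) _ _

lemma continuous_integral_continuousMap_left [BorelSpace Ω] (μ : Measure Ω) [IsFiniteMeasure μ] :
    Continuous fun p : C(Ω, ℝ) => ∫ ω, p ω ∂μ :=
  (continuous_integral.comp (ContinuousMap.toLp 1 μ ℝ).continuous).congr fun p =>
    integral_congr_ae (ContinuousMap.coeFn_toLp μ p)

end CompactSpace

theorem IsAffine.eq_integral_diracProba {Ω : Type*} [MetricSpace Ω] [CompactSpace Ω]
    [MeasurableSpace Ω] [BorelSpace Ω] {H : ProbabilityMeasure Ω → ℝ} (hA : IsAffine H)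
    (hH : Continuous H) (μ : ProbabilityMeasure Ω) :
    H μ = ∫ ω, H (diracProba ω) ∂(μ : Measure Ω) := by
  have hprice : Continuous fun ω : Ω => H (diracProba ω) := hH.comp continuous_diracProba
  refine mem_of_isClosed_of_mix_mem
    (S := {μ | H μ = ∫ ω, H (diracProba ω) ∂(μ : Measure Ω)}) (isClosed_eq hH ?_) ?_ ?_ μ
  · exact ProbabilityMeasure.continuous_integral_continuousMap (⟨_, hprice⟩ : C(Ω, ℝ))
  · exact fun a => (integral_diracProba (fun ω => H (diracProba ω)) a).symm
  · intro μ hμ η hη t ht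
    exact (hA μ η t ht).trans (hμ ▸ hη ▸ (isAffine_integral hprice μ η t ht).symm)

section LipschitzEnvelope

/-- The infimal convolution of the family of values `h i` at the points `b i` with `K * dist`: the
largest `K`-Lipschitz function whose value at each `b i` is at most `h i`, provided the infima are
bounded below. -/
noncomputable def lipschitzEnvelope {ι E : Type*} [PseudoMetricSpace E] (K : ℝ≥0) (b : ι → E)
    (h : ι → ℝ) (x : E) : ℝ :=
  ⨅ i, (h i + K * dist x (b i))

variable {ι E : Type*} {K : ℝ≥0} {b : ι → E} {h : ι → ℝ} {v : E → ℝ}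

section PseudoMetricSpace

variable [PseudoMetricSpace E]

lemma le_add_mul_dist (hv : LipschitzWith K v) (hvh : ∀ i, v (b i) ≤ h i)
    (x : E) (i : ι) : v x ≤ h i + K * dist x (b i) :=
  (hv.le_add_mul x (b i)).trans (by gcongr; exact hvh i)

lemma bddBelow_range_add_mul_dist (hv : LipschitzWith K v) (hvh : ∀ i, v (b i) ≤ h i) (x : E) :
    BddBelow (range fun i => h i + K * dist x (b i)) :=
  ⟨v x, forall_mem_range.2 (le_add_mul_dist hv hvh x)⟩

lemma le_lipschitzEnvelope [Nonempty ι] (hv : LipschitzWith K v) (hvh : ∀ i, v (b i) ≤ h i)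
    (x : E) : v x ≤ lipschitzEnvelope K b h x :=
  le_ciInf (le_add_mul_dist hv hvh x)

lemma lipschitzEnvelope_apply_le
    (hbdd : ∀ x, BddBelow (range fun i => h i + K * dist x (b i))) (i : ι) :
    lipschitzEnvelope K b h (b i) ≤ h i :=
  (ciInf_le (hbdd (b i)) i).trans_eq (by simp)

lemma lipschitzWith_lipschitzEnvelope [Nonempty ι]
    (hbdd : ∀ x, BddBelow (range fun i => h i + K * dist x (b i))) :
    LipschitzWith K (lipschitzEnvelope K b h) := by
  refine LipschitzWith.of_le_add_mul K fun x y => ?_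
  rw [← sub_le_iff_le_add]
  refine le_ciInf fun i => ?_
  rw [sub_le_iff_le_add]
  calc lipschitzEnvelope K b h x ≤ h i + K * dist x (b i) := ciInf_le (hbdd x) i
    _ ≤ h i + K * (dist y (b i) + dist x y) := by
        gcongr; rw [add_comm]; exact dist_triangle x y (b i)
    _ = h i + K * dist y (b i) + K * dist x y := by ring

end PseudoMetricSpace

variable [SeminormedAddCommGroup E] [NormedSpace ℝ E]

lemma convexOn_lipschitzEnvelope [Nonempty ι]
    (hbdd : ∀ x, BddBelow (range fun i => h i + K * dist x (b i)))
    (hconv : Convex ℝ (range fun i => (b i, h i))) :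
    ConvexOn ℝ univ (lipschitzEnvelope K b h) := by
  refine ⟨convex_univ, fun x _ y _ a c ha hc hac => ?_⟩
  simp only [lipschitzEnvelope, smul_eq_mul, Real.mul_iInf_of_nonneg ha,
    Real.mul_iInf_of_nonneg hc]
  refine le_ciInf_add_ciInf fun i j => ?_
  obtain ⟨k, hk⟩ := hconv (mem_range_self i) (mem_range_self j) ha hc hac
  obtain ⟨hbk, hhk⟩ : b k = a • b i + c • b j ∧ h k = a * h i + c * h j := by
    simpa [Prod.ext_iff] using hk
  have hdist : dist (a • x + c • y) (b k) ≤ a * dist x (b i) + c * dist y (b j) := by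
    rw [hbk]
    refine (dist_add_add_le _ _ _ _).trans_eq ?_
    rw [dist_smul₀, dist_smul₀, Real.norm_of_nonneg ha, Real.norm_of_nonneg hc]
  calc ⨅ i, (h i + K * dist (a • x + c • y) (b i))
      ≤ h k + K * dist (a • x + c • y) (b k) := ciInf_le (hbdd _) k
    _ ≤ (a * h i + c * h j) + K * (a * dist x (b i) + c * dist y (b j)) := by
        rw [hhk]; gcongr
    _ = a * (h i + K * dist x (b i)) + c * (h j + K * dist y (b j)) := by ring

end LipschitzEnvelope

lemma isCompact_setOf_mem_and_dist_le {X α : Type*} [TopologicalSpace X] [MetricSpace α]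
    {s : Set α} (hs : IsCompact s) {d : X → X → ℝ} (hd : ∀ x, Tendsto (d x) (𝓝 x) (𝓝 0)) :
    IsCompact {p : C(X, α) | (∀ x, p x ∈ s) ∧ ∀ x y, dist (p x) (p y) ≤ d x y} := by
  apply ArzelaAscoli.isCompact_of_equicontinuous
  · have himage : ContinuousMap.toFun ''
        {p : C(X, α) | (∀ x, p x ∈ s) ∧ ∀ x y, dist (p x) (p y) ≤ d x y} =
        univ.pi (fun _ => s) ∩ {f | ∀ x y, dist (f x) (f y) ≤ d x y} := by
      ext f
      constructor
      · rintro ⟨p, ⟨hps, hpd⟩, rfl⟩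
        exact ⟨fun x _ => hps x, hpd⟩
      · rintro ⟨hfs, hfd⟩
        have hf : Continuous f := continuous_iff_continuousAt.2 fun x =>
          tendsto_iff_dist_tendsto_zero.2 <|
            squeeze_zero (fun _ => dist_nonneg) (fun y => dist_comm (f y) (f x) ▸ hfd x y) (hd x)
        exact ⟨⟨f, hf⟩, ⟨fun x => hfs x (mem_univ x), hfd⟩, rfl⟩
    rw [himage]
    refine (isCompact_univ_pi fun _ => hs).inter_right ?_
    simp only [ofPred_forall]
    exact isClosed_iInter fun x => isClosed_iInter fun y =>
      isClosed_le (by fun_prop) continuous_const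
  · exact fun x => Metric.equicontinuousAt_of_continuity_modulus (d x) (hd x) _
      (Eventually.of_forall fun y p => p.2.2 x y)

section Persuasion

variable {Ω : Type*} [TopologicalSpace Ω] [MeasurableSpace Ω]

/-- The price functions of the dual persuasion problem, those continuous `p` with
`V μ ≤ ∫ p dμ` for every posterior `μ`, that have modulus of continuity `d`. -/
def pricesWithModulus (V : ProbabilityMeasure Ω → ℝ) (d : Ω → Ω → ℝ) : Set C(Ω, ℝ) :=
  {p | (∀ x y, dist (p x) (p y) ≤ d x y) ∧ ∀ μ, V μ ≤ ∫ ω, p ω ∂(μ : Measure Ω)}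

lemma concaveClosure_le [OpensMeasurableSpace Ω]
    {V H : ProbabilityMeasure Ω → ℝ} (hH : Continuous H) (hA : IsAffine H) (hVH : ∀ μ, V μ ≤ H μ)
    (μ : ProbabilityMeasure Ω) : concaveClosure V μ ≤ H μ := by
  refine csInf_le ⟨V μ, ?_⟩ ⟨H, hH, hA, hVH, rfl⟩
  rintro _ ⟨G, -, -, hVG, rfl⟩
  exact hVG μ

lemma regularPersuasion_of_minimal_majorant [OpensMeasurableSpace Ω]
    {V H : ProbabilityMeasure Ω → ℝ} {μ₀ : ProbabilityMeasure Ω} (hH : Continuous H)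
    (hA : IsAffine H) (hVH : ∀ μ, V μ ≤ H μ)
    (hmin : ∀ G : ProbabilityMeasure Ω → ℝ, Continuous G → IsAffine G → (∀ μ, V μ ≤ G μ) →
      H μ₀ ≤ G μ₀) :
    RegularPersuasion V μ₀ := by
  refine ⟨H, hH, hA, le_antisymm (le_csInf ⟨_, H, hH, hA, hVH, rfl⟩ ?_) ?_, ?_⟩
  · rintro _ ⟨G, hG, hGA, hVG, rfl⟩
    exact hmin G hG hGA hVG
  · exact concaveClosure_le hH hA hVH μ₀
  · exact concaveClosure_le hH hA hVH

variable [CompactSpace Ω] [BorelSpace Ω] {V : ProbabilityMeasure Ω → ℝ} {d : Ω → Ω → ℝ}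

lemma isClosed_pricesWithModulus : IsClosed (pricesWithModulus V d) := by
  simp only [pricesWithModulus, ofPred_and, ofPred_forall]
  exact (isClosed_iInter fun x => isClosed_iInter fun y =>
    isClosed_le (by fun_prop) continuous_const).inter
    (isClosed_iInter fun _ =>
      isClosed_le continuous_const (continuous_integral_continuousMap_left _))

variable [T1Space Ω]

lemma mem_Icc_of_mem_pricesWithModulus {p : C(Ω, ℝ)} (hp : p ∈ pricesWithModulus V d) {A D c : ℝ}
    (hA : ∀ μ, A ≤ V μ) (hD : ∀ x y, d x y ≤ D) {μ₀ : ProbabilityMeasure Ω}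
    (hc : ∫ ω, p ω ∂(μ₀ : Measure Ω) ≤ c) (x : Ω) : p x ∈ Icc A (c + D) := by
  constructor
  · calc A ≤ V (diracProba x) := hA _
      _ ≤ ∫ ω, p ω ∂(diracProba x : Measure Ω) := hp.2 _
      _ = p x := integral_diracProba p x
  · have hosc (ω : Ω) : p x - D ≤ p ω := by
      linarith [(le_abs_self _).trans (hp.1 x ω), hD x ω]
    have hmean : p x - D ≤ ∫ ω, p ω ∂(μ₀ : Measure Ω) := by
      simpa using integral_mono (integrable_const (p x - D))
        (integrable_of_continuous p.continuous (μ₀ : Measure Ω)) hosc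
    linarith

lemma isCompact_pricesWithModulus_inter_integral_le (hV : BddBelow (range V))
    (hd : Continuous d.uncurry) (hdiag : ∀ x, d x x = 0) (μ₀ : ProbabilityMeasure Ω) (c : ℝ) :
    IsCompact (pricesWithModulus V d ∩ {p | ∫ ω, p ω ∂(μ₀ : Measure Ω) ≤ c}) := by
  obtain ⟨A, hA⟩ := hV
  obtain ⟨D, hD⟩ := (isCompact_range hd).bddAbove
  have htendsto (x : Ω) : Tendsto (d x) (𝓝 x) (𝓝 0) :=
    hdiag x ▸ (hd.comp (Continuous.prodMk_right x)).tendsto x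
  refine (isCompact_setOf_mem_and_dist_le (isCompact_Icc (a := A) (b := c + D))
    htendsto).of_isClosed_subset (isClosed_pricesWithModulus.inter
      (isClosed_le (continuous_integral_continuousMap_left _) continuous_const)) ?_
  rintro p ⟨hp, hpc⟩
  exact ⟨mem_Icc_of_mem_pricesWithModulus hp (fun μ => hA (mem_range_self μ))
    (fun x y => hD (mem_range_self (x, y))) hpc, hp.1⟩

lemma exists_isMinOn_pricesWithModulus (hV : BddBelow (range V)) (hd : Continuous d.uncurry)
    (hdiag : ∀ x, d x x = 0) (hne : (pricesWithModulus V d).Nonempty)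
    (μ₀ : ProbabilityMeasure Ω) :
    ∃ p ∈ pricesWithModulus V d,
      IsMinOn (fun p : C(Ω, ℝ) => ∫ ω, p ω ∂(μ₀ : Measure Ω)) (pricesWithModulus V d) p := by
  obtain ⟨p₀, hp₀⟩ := hne
  refine (continuous_integral_continuousMap_left _).continuousOn.exists_isMinOn'
    isClosed_pricesWithModulus hp₀ ?_
  have hcompact := isCompact_pricesWithModulus_inter_integral_le hV hd hdiag μ₀
    (∫ ω, p₀ ω ∂(μ₀ : Measure Ω))
  filter_upwards [mem_inf_of_left hcompact.compl_mem_cocompact,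
    mem_inf_of_right (mem_principal_self _)] with p hpc hp
  exact le_of_not_ge fun hle => hpc ⟨hp, hle⟩

theorem regularPersuasion_of_forall_exists_price (hV : Bornology.IsBounded (range V))
    (hd : Continuous d.uncurry) (hdiag : ∀ x, d x x = 0) {μ₀ : ProbabilityMeasure Ω}
    (himprove : ∀ H : ProbabilityMeasure Ω → ℝ, Continuous H → IsAffine H → (∀ μ, V μ ≤ H μ) →
      ∃ p ∈ pricesWithModulus V d, ∫ ω, p ω ∂(μ₀ : Measure Ω) ≤ H μ₀) :
    RegularPersuasion V μ₀ := by
  obtain ⟨B, hB⟩ := hV.bddAbove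
  have hne : (pricesWithModulus V d).Nonempty := by
    obtain ⟨p, hp, -⟩ := himprove (fun _ => B) continuous_const (fun _ _ _ _ => by ring)
      fun μ => hB (mem_range_self μ)
    exact ⟨p, hp⟩
  obtain ⟨p, hp, hpmin⟩ := exists_isMinOn_pricesWithModulus hV.bddBelow hd hdiag hne μ₀
  refine regularPersuasion_of_minimal_majorant
    (ProbabilityMeasure.continuous_integral_continuousMap p) (isAffine_integral p.continuous) hp.2
    fun H hH hA hVH => ?_
  obtain ⟨q, hq, hqH⟩ := himprove H hH hA hVH
  exact (hpmin hq).trans hqH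

end Persuasion

section MomentPersuasion

variable {Ω : Type*} [MetricSpace Ω] [CompactSpace Ω] [MeasurableSpace Ω] [BorelSpace Ω]
  {E : Type*} [NormedAddCommGroup E] [NormedSpace ℝ E] {m : Ω → E} {v : E → ℝ} {K : ℝ≥0}

lemma convex_range_integral_prodMk (hm : Continuous m) {H : ProbabilityMeasure Ω → ℝ}
    (hA : IsAffine H) :
    Convex ℝ (range fun μ : ProbabilityMeasure Ω => (∫ ω, m ω ∂(μ : Measure Ω), H μ)) :=
  convex_range_of_map_mix fun μ η t ht => Prod.ext
    (integral_mix (integrable_of_continuous hm _) (integrable_of_continuous hm _) t ht)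
    (hA μ η t ht)

variable [CompleteSpace E]

theorem exists_price_integral_le (hm : Continuous m) (hv : LipschitzWith K v)
    {H : ProbabilityMeasure Ω → ℝ} (hH : Continuous H) (hA : IsAffine H)
    (hVH : ∀ μ : ProbabilityMeasure Ω, v (∫ ω, m ω ∂(μ : Measure Ω)) ≤ H μ)
    (μ₀ : ProbabilityMeasure Ω) :
    ∃ p ∈ pricesWithModulus
        (fun μ : ProbabilityMeasure Ω => v (∫ ω, m ω ∂(μ : Measure Ω)))
        (fun x y => K * dist (m x) (m y)),
      ∫ ω, p ω ∂(μ₀ : Measure Ω) ≤ H μ₀ := by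
  have : Nonempty (ProbabilityMeasure Ω) := ⟨μ₀⟩
  let P : E → ℝ := lipschitzEnvelope K (fun μ : ProbabilityMeasure Ω => ∫ ω, m ω ∂(μ : Measure Ω)) H
  have hbdd := bddBelow_range_add_mul_dist hv hVH
  have hPlip : LipschitzWith K P := lipschitzWith_lipschitzEnvelope hbdd
  have hPconv : ConvexOn ℝ univ P :=
    convexOn_lipschitzEnvelope hbdd (convex_range_integral_prodMk hm hA)
  have hPm : Continuous fun ω => P (m ω) := hPlip.continuous.comp hm
  refine ⟨⟨fun ω => P (m ω), hPm⟩, ⟨fun x y => hPlip.dist_le_mul _ _, fun μ => ?_⟩, ?_⟩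
  · calc v (∫ ω, m ω ∂(μ : Measure Ω)) ≤ P (∫ ω, m ω ∂(μ : Measure Ω)) :=
          le_lipschitzEnvelope hv hVH _
      _ ≤ ∫ ω, P (m ω) ∂(μ : Measure Ω) :=
          hPconv.map_integral_le hPlip.continuous.continuousOn isClosed_univ
            (Eventually.of_forall fun _ => mem_univ _) (integrable_of_continuous hm _)
            (integrable_of_continuous hPm _)
  · have hPH (ω : Ω) : P (m ω) ≤ H (diracProba ω) := by
      simpa only [integral_diracProba] using lipschitzEnvelope_apply_le hbdd (diracProba ω)
    rw [hA.eq_integral_diracProba hH μ₀]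
    exact integral_mono (integrable_of_continuous hPm _)
      (integrable_of_continuous (hH.comp continuous_diracProba) _) hPH

theorem regularPersuasion_of_lipschitzWith (hm : Continuous m) (hv : LipschitzWith K v)
    (μ₀ : ProbabilityMeasure Ω) :
    RegularPersuasion (fun μ : ProbabilityMeasure Ω => v (∫ ω, m ω ∂(μ : Measure Ω))) μ₀ := by
  refine regularPersuasion_of_forall_exists_price (d := fun x y => K * dist (m x) (m y)) ?_
    (by fun_prop) (by simp) fun H hH hA hVH => exists_price_integral_le hm hv hH hA hVH μ₀
  simpa only [← range_comp, Function.comp_def] using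
    hv.isBounded_image (isBounded_range_integral (isCompact_range hm).isBounded)

end MomentPersuasion

section ConvexHull

variable {E : Type*} [AddCommGroup E] [Module ℝ E]

lemma convexHull_range_eq_image_stdSimplex {ι : Type*} [Fintype ι] (z : ι → E) :
    convexHull ℝ (range z) = Fintype.linearCombination ℝ z '' stdSimplex ℝ ι := by
  classical
  calc convexHull ℝ (range z)
      = convexHull ℝ (Fintype.linearCombination ℝ z '' range fun i => Pi.single i 1) := by
        simp [← range_comp, Function.comp_def]
    _ = Fintype.linearCombination ℝ z '' stdSimplex ℝ ι := by
        rw [← LinearMap.image_convexHull, convexHull_rangle_single_eq_stdSimplex]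

lemma exists_fin_of_mem_convexHull [FiniteDimensional ℝ E] {s : Set E} {x : E}
    (hx : x ∈ convexHull ℝ s) :
    ∃ z : Fin (Module.finrank ℝ E + 1) → E, range z ⊆ s ∧ x ∈ convexHull ℝ (range z) := by
  rw [convexHull_eq_union] at hx
  simp only [mem_iUnion] at hx
  obtain ⟨t, hts, hind, hxt⟩ := hx
  have hcard : Fintype.card t ≤ Module.finrank ℝ E + 1 :=
    hind.card_le_finrank_succ.trans (Nat.succ_le_succ (Submodule.finrank_le _))
  have : Nonempty t := (convexHull_nonempty_iff.1 ⟨x, hxt⟩).to_subtype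
  obtain ⟨e⟩ : Nonempty (t ↪ Fin (Module.finrank ℝ E + 1)) :=
    Function.Embedding.nonempty_of_card_le (by simpa using hcard)
  have hrange : range (fun j => ((Function.invFun e j : t) : E)) = t := by
    have := (Function.invFun_surjective e.injective).range_comp ((↑) : t → E)
    simpa [Function.comp_def] using this
  exact ⟨fun j => ((Function.invFun e j : t) : E), hrange ▸ hts, hrange ▸ hxt⟩

theorem isCompact_convexHull [TopologicalSpace E] [ContinuousAdd E] [ContinuousSMul ℝ E]
    [FiniteDimensional ℝ E] {s : Set E} (hs : IsCompact s) :
    IsCompact (convexHull ℝ s) := by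
  have himage : convexHull ℝ s =
      (fun q : (Fin (Module.finrank ℝ E + 1) → ℝ) × (Fin (Module.finrank ℝ E + 1) → E) =>
        ∑ i, q.1 i • q.2 i) '' (stdSimplex ℝ _ ×ˢ univ.pi fun _ => s) := by
    ext x
    constructor
    · intro hx
      obtain ⟨z, hzs, hxz⟩ := exists_fin_of_mem_convexHull hx
      rw [convexHull_range_eq_image_stdSimplex] at hxz
      obtain ⟨w, hw, rfl⟩ := hxz
      exact ⟨(w, z), ⟨hw, fun i _ => hzs (mem_range_self i)⟩, rfl⟩
    · rintro ⟨⟨w, z⟩, ⟨hw, hz⟩, rfl⟩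
      exact (convex_convexHull ℝ s).sum_mem (fun i _ => hw.1 i) hw.2
        fun i _ => subset_convexHull ℝ s (hz i (mem_univ i))
  rw [himage]
  exact ((isCompact_stdSimplex ℝ _).prod (isCompact_univ_pi fun _ => hs)).image (by fun_prop)

end ConvexHull

theorem moment_regular_of_lipschitz_general
    {Ω : Type*} [MetricSpace Ω] [CompactSpace Ω] [MeasurableSpace Ω] [BorelSpace Ω]
    (μ₀ : ProbabilityMeasure Ω)
    {E : Type*} [NormedAddCommGroup E] [NormedSpace ℝ E] [CompleteSpace E]
    (m : Ω → E) (hm : Continuous m) (v : E → ℝ)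
    (K : ℝ≥0) (hlip : LipschitzOnWith K v (closedConvexHull ℝ (range m))) :
    RegularPersuasion (fun μ : ProbabilityMeasure Ω => v (∫ ω, m ω ∂(μ : Measure Ω))) μ₀ := by
  obtain ⟨g, hg, hvg⟩ := hlip.extend_real
  have hmean (μ : ProbabilityMeasure Ω) :
      ∫ ω, m ω ∂(μ : Measure Ω) ∈ closedConvexHull ℝ (range m) :=
    convex_closedConvexHull.integral_mem isClosed_closedConvexHull
      (Eventually.of_forall fun ω => subset_closedConvexHull (mem_range_self ω))
      (integrable_of_continuous hm _)
  simpa only [fun μ => hvg (hmean μ)] using regularPersuasion_of_lipschitzWith hm hg μ₀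

/-- **Proposition 4**: in moment persuasion, if `v` is Lipschitz continuous on `X`, then the
persuasion problem with objective `V(μ) = v(∫ m dμ)` is regular. -/
theorem moment_regular_of_lipschitz
    {Ω : Type*} [MetricSpace Ω] [CompactSpace Ω] [MeasurableSpace Ω] [BorelSpace Ω]
    (μ₀ : ProbabilityMeasure Ω)
    (hfull : ∀ U : Set Ω, IsOpen U → U.Nonempty → 0 < (μ₀ : Measure Ω) U)
    {N : ℕ} (m : Ω → EuclideanSpace ℝ (Fin N)) (hm : Continuous m)
    (v : EuclideanSpace ℝ (Fin N) → ℝ) (hv : UpperSemicontinuous v)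
    (X : Set (EuclideanSpace ℝ (Fin N))) (hX : X = convexHull ℝ (Set.range m))
    (K : NNReal) (hlip : LipschitzOnWith K v X) :
    RegularPersuasion (fun μ : ProbabilityMeasure Ω => v (∫ ω, m ω ∂(μ : Measure Ω))) μ₀ := by
  have hcompact : IsCompact (convexHull ℝ (range m)) := isCompact_convexHull (isCompact_range hm)
  have hclosed : closedConvexHull ℝ (range m) = X := by
    rw [closedConvexHull_eq_closure_convexHull, hcompact.isClosed.closure_eq, hX]
  exact moment_regular_of_lipschitz_general μ₀ m hm v K (hclosed ▸ hlip)
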